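/- Sequential composition left-subdistributes over probabilistic choice with respect to simulation: for probabilistic automata P, Q, R with pairwise disjoint state spaces and every p ∈ [0,1], P · (Q ⊕_p R) ≤ P · Q ⊕_p P · R (where on the right the two occurrences of P are taken as disjoint copies). -/

import Mathlib

open scoped ENNReal

namespace PCKA

/-- A probabilistic automaton over the (non-silent) action alphabet `α`, with state
space `σ`.  Transition labels are `Option α`, where `none` plays the role of the
silent action `τ`; `trans x a μ` means `x —a→ μ` where `μ` is a (countably
supported) probability distribution over states, `init` is the initial
distribution and `final` the set of final states. -/
structure PAut (α : Type) (σ : Type) where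
  trans : σ → Option α → PMF σ → Prop
  init : PMF σ
  final : Set σ

/-- The lifting `S̄ ⊆ D(X) × D(Y)` of a relation `S ⊆ X × D(Y)`: `μ S̄ ν` iff there
are weights `p n` summing to `1`, states `x n` and distributions `νs n` with
`μ = Σ_n p n · δ_{x n}`, `x n S νs n` for each `n`, and `ν = Σ_n p n · νs n`. -/
def Lift {X Y : Type} (S : X → PMF Y → Prop) (μ : PMF X) (ν : PMF Y) : Prop :=
  ∃ (p : ℕ → ℝ≥0∞) (x : ℕ → X) (νs : ℕ → PMF Y),
    (∑' n, p n) = 1 ∧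
    (∀ s, μ s = ∑' n, p n * (PMF.pure (x n)) s) ∧
    (∀ n, S (x n) (νs n)) ∧
    (∀ t, ν t = ∑' n, p n * (νs n) t)

/-- The double lifting `T̿ ⊆ D(X) × D(Z)` of a relation `T ⊆ X × Z`, via a weight
function `w`. -/
def DLift {X Z : Type} (T : X → Z → Prop) (μ : PMF X) (ψ : PMF Z) : Prop :=
  ∃ w : X → Z → ℝ≥0∞,
    (∀ x z, 0 < w x z → T x z) ∧
    (∀ x, (∑' z, w x z) = μ x) ∧
    (∀ z, (∑' x, w x z) = ψ z)

/-- Flattening `π : D(D(Y)) → D(Y)`, `π(ψ) = Σ_{ν} ψ(ν)·ν`. -/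
noncomputable def flat {Y : Type} (ψ : PMF (PMF Y)) : PMF Y := ψ.bind id

/-- Single transition step, with the τ-transitions extended by reflexivity
(`x —τ→ δ_x` is always allowed). -/
def step {α σ : Type} (P : PAut α σ) (a : Option α) (x : σ) (μ : PMF σ) : Prop :=
  P.trans x a μ ∨ (a = none ∧ μ = PMF.pure x)

/-- Weak internal moves `⇒`: the reflexive-transitive closure of the lifted
(extended) τ-transition relation on distributions. -/
def WeakTau {α σ : Type} (P : PAut α σ) : PMF σ → PMF σ → Prop :=
  Relation.ReflTransGen (Lift (step P none))

/-- Weak `a`-transition `μ ⇒^a μ'`: `μ ⇒ μ₁ —ā→ μ₂ ⇒ μ'`. -/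
def WeakStep {α σ : Type} (P : PAut α σ) (a : Option α) (μ μ' : PMF σ) : Prop :=
  ∃ μ₁ μ₂, WeakTau P μ μ₁ ∧ Lift (step P a) μ₁ μ₂ ∧ WeakTau P μ₂ μ'

/-- A probabilistic simulation from `P` to `Q` (Deng et al. style). -/
structure IsSimulation {α σ τ' : Type} (P : PAut α σ) (Q : PAut α τ')
    (S : σ → PMF τ' → Prop) : Prop where
  init : ∃ ν₀', WeakTau Q Q.init ν₀' ∧ Lift S P.init ν₀'
  step : ∀ x a μ', P.trans x a μ' → ∀ ν, S x ν →
    ∃ ν', WeakStep Q a ν ν' ∧ Lift S μ' ν'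
  final : ∀ x ν, x ∈ P.final → S x ν →
    ∃ ν', WeakTau Q ν ν' ∧ ∀ y ∈ ν'.support, y ∈ Q.final

/-- A probabilistic weak forward simulation from `P` to `Q` (Segala style). -/
structure IsWFSimulation {α σ τ' : Type} (P : PAut α σ) (Q : PAut α τ')
    (S : σ → PMF τ' → Prop) : Prop where
  init : ∃ ψ₀ : PMF (PMF τ'), DLift S P.init ψ₀ ∧ WeakTau Q Q.init (flat ψ₀)
  step : ∀ x a μ', P.trans x a μ' → ∀ ν, S x ν →
    ∃ ψ : PMF (PMF τ'), WeakStep Q a ν (flat ψ) ∧ DLift S μ' ψ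
  final : ∀ x ν, x ∈ P.final → S x ν →
    ∃ ψ : PMF (PMF τ'), (∀ ρ ∈ ψ.support, ∀ y ∈ ρ.support, y ∈ Q.final) ∧
      WeakTau Q ν (flat ψ)

/-- `P ≤ Q`: there exists a probabilistic simulation from `P` to `Q`. -/
def Sim {α σ τ' : Type} (P : PAut α σ) (Q : PAut α τ') : Prop :=
  ∃ S, IsSimulation P Q S

/-- Simulation equivalence `P ≡ Q`. -/
def SimEquiv {α σ τ' : Type} (P : PAut α σ) (Q : PAut α τ') : Prop :=
  Sim P Q ∧ Sim Q P

/-- Convex combination `p·μ + (1−p)·ν` of two distributions. -/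
noncomputable def mix {X : Type} (p : ℝ≥0∞) (hp : p ≤ 1) (μ ν : PMF X) : PMF X :=
  ⟨fun x => p * μ x + (1 - p) * ν x, by
    refine ENNReal.summable.hasSum_iff.mpr ?_
    rw [ENNReal.tsum_add, ENNReal.tsum_mul_left, ENNReal.tsum_mul_left,
      μ.tsum_coe, ν.tsum_coe, mul_one, mul_one, add_tsub_cancel_of_le hp]⟩

/-- Product distribution `μ × ν`, with `(μ × ν)(x,y) = μ(x)·ν(y)`. -/
noncomputable def pprod {X Y : Type} (μ : PMF X) (ν : PMF Y) : PMF (X × Y) :=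
  μ.bind fun x => ν.map fun y => (x, y)

/-- The skip automaton `1`: one state, no transitions, that state is final. -/
noncomputable def skip (α : Type) : PAut α Unit :=
  ⟨fun _ _ _ => False, PMF.pure (), Set.univ⟩

/-- The deadlock automaton `0`: one state, no transitions, no final state. -/
noncomputable def deadlock (α : Type) : PAut α Unit :=
  ⟨fun _ _ _ => False, PMF.pure (), ∅⟩

/-- Nondeterministic choice `P + Q`: disjoint union of the two automata (realised
by the sum type) plus a fresh initial state `z = none` with `z —τ→ μ₀` and
`z —τ→ ν₀`. -/
noncomputable def nchoice {α σ τ' : Type} (P : PAut α σ) (Q : PAut α τ') :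
    PAut α (Option (σ ⊕ τ')) where
  trans := fun s a μ =>
    match s with
    | none => a = none ∧
        (μ = P.init.map (fun x => some (Sum.inl x)) ∨
         μ = Q.init.map (fun y => some (Sum.inr y)))
    | some (Sum.inl x) => ∃ μ', P.trans x a μ' ∧ μ = μ'.map (fun x => some (Sum.inl x))
    | some (Sum.inr y) => ∃ ν', Q.trans y a ν' ∧ μ = ν'.map (fun y => some (Sum.inr y))
  init := PMF.pure none
  final := {s | (∃ x ∈ P.final, s = some (Sum.inl x)) ∨ (∃ y ∈ Q.final, s = some (Sum.inr y))}

/-- Sequential composition `P · Q`: disjoint union (realised by the sum type),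
with a τ-transition from each final state of `P` to the initial distribution of
`Q`; initial distribution that of `P`, final states those of `Q`. -/
noncomputable def pseq {α σ τ' : Type} (P : PAut α σ) (Q : PAut α τ') :
    PAut α (σ ⊕ τ') where
  trans := fun s a μ =>
    match s with
    | Sum.inl x =>
        (∃ μ', P.trans x a μ' ∧ μ = μ'.map Sum.inl) ∨
        (a = none ∧ x ∈ P.final ∧ μ = Q.init.map Sum.inr)
    | Sum.inr y => ∃ ν', Q.trans y a ν' ∧ μ = ν'.map Sum.inr
  init := P.init.map Sum.inl
  final := {s | ∃ y ∈ Q.final, s = Sum.inr y}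

/-- Kleene star `P*`: a fresh state `z = none` which is initial and the only
final state, with `z —τ→ μ₀` and `x —τ→ δ_z` for each final state `x` of `P`. -/
noncomputable def pstar {α σ : Type} (P : PAut α σ) : PAut α (Option σ) where
  trans := fun s a μ =>
    match s with
    | none => a = none ∧ μ = P.init.map some
    | some x =>
        (∃ μ', P.trans x a μ' ∧ μ = μ'.map some) ∨
        (a = none ∧ x ∈ P.final ∧ μ = PMF.pure none)
  init := PMF.pure none
  final := {none}

/-- Probabilistic choice `P ⊕_p Q`: disjoint union with initial distribution
`p·μ₀ + (1−p)·ν₀`. -/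
noncomputable def pchoice {α σ τ' : Type} (p : ℝ≥0∞) (hp : p ≤ 1)
    (P : PAut α σ) (Q : PAut α τ') : PAut α (σ ⊕ τ') where
  trans := fun s a μ =>
    match s with
    | Sum.inl x => ∃ μ', P.trans x a μ' ∧ μ = μ'.map Sum.inl
    | Sum.inr y => ∃ ν', Q.trans y a ν' ∧ μ = ν'.map Sum.inr
  init := mix p hp (P.init.map Sum.inl) (Q.init.map Sum.inr)
  final := {s | (∃ x ∈ P.final, s = Sum.inl x) ∨ (∃ y ∈ Q.final, s = Sum.inr y)}

/-- CSP-style parallel composition `P ∥_A Q` synchronising on the frame `A`: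
actions in `A` must be performed jointly, all other actions (including τ) are
interleaved. -/
noncomputable def par {α σ τ' : Type} (A : Set α) (P : PAut α σ) (Q : PAut α τ') :
    PAut α (σ × τ') where
  trans := fun s a μπ => ∃ μ ν, μπ = pprod μ ν ∧
    ((∃ b ∈ A, a = some b ∧ P.trans s.1 a μ ∧ Q.trans s.2 a ν) ∨
     ((∀ b ∈ A, a ≠ some b) ∧ P.trans s.1 a μ ∧ ν = PMF.pure s.2) ∨
     ((∀ b ∈ A, a ≠ some b) ∧ Q.trans s.2 a ν ∧ μ = PMF.pure s.1))
  init := pprod P.init Q.init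
  final := {s | s.1 ∈ P.final ∧ s.2 ∈ Q.final}

/-!
On the right-hand side the choice between `Q` and `R` is made before `P` runs, on the left-hand side
after it. Running the two copies of `P` in lockstep, with weights `p` and `1 - p`, makes the early
choice unobservable: when `P` terminates, the mixture of the copies moves to the mixture of the
initial distributions of `Q` and `R`, which is where the left-hand side goes.
-/

section Mix

variable {X Y : Type} (p : ℝ≥0∞) (hp : p ≤ 1)

theorem mix_apply (μ ν : PMF X) (x : X) : mix p hp μ ν x = p * μ x + (1 - p) * ν x := rfl

theorem mix_bind (μ ν : PMF X) (f : X → PMF Y) :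
    (mix p hp μ ν).bind f = mix p hp (μ.bind f) (ν.bind f) := by
  ext y
  simp only [mix_apply, PMF.bind_apply, ← ENNReal.tsum_mul_left, ← ENNReal.tsum_add]
  exact tsum_congr fun x => by ring

theorem mix_map (μ ν : PMF X) (f : X → Y) :
    (mix p hp μ ν).map f = mix p hp (μ.map f) (ν.map f) :=
  mix_bind p hp μ ν _

theorem bind_mix {ι : Type*} (μ : PMF ι) (f g : ι → PMF Y) :
    (μ.bind fun i => mix p hp (f i) (g i)) = mix p hp (μ.bind f) (μ.bind g) := by
  ext y
  simp only [mix_apply, PMF.bind_apply, ← ENNReal.tsum_mul_left, ← ENNReal.tsum_add]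
  exact tsum_congr fun i => by ring

end Mix

theorem map_eq_self_of_eqOn_support {ι : Type*} {μ : PMF ι} {f : ι → ι}
    (hf : Set.EqOn f id μ.support) : μ.map f = μ := by
  have bindOnSupport_eq :
      μ.bindOnSupport (fun i _ => PMF.pure (f i)) = μ.bindOnSupport fun i _ => PMF.pure i :=
    congrArg μ.bindOnSupport (funext₂ fun _ hi => congrArg PMF.pure (hf hi))
  rwa [PMF.bindOnSupport_eq_bind, PMF.bindOnSupport_pure] at bindOnSupport_eq

theorem exists_pmf_nat_map_eq {ι : Type*} (μ : PMF ι) :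
    ∃ (q : PMF ℕ) (e : ℕ → ι), (∀ n, e n ∈ μ.support) ∧ q.map e = μ := by
  obtain ⟨e, support_eq⟩ := μ.support_countable.exists_eq_range μ.support_nonempty
  refine ⟨μ.map (Function.invFun e), e, fun n => support_eq ▸ Set.mem_range_self n, ?_⟩
  rw [PMF.map_comp]
  refine map_eq_self_of_eqOn_support fun i hi => ?_
  rw [support_eq] at hi
  exact Function.invFun_eq hi

section Lift

variable {X Y : Type} {S : X → PMF Y → Prop}

theorem lift_iff_exists_pmf_nat {μ : PMF X} {ν : PMF Y} :
    Lift S μ ν ↔ ∃ (q : PMF ℕ) (x : ℕ → X) (νs : ℕ → PMF Y),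
      (∀ n, S (x n) (νs n)) ∧ μ = q.map x ∧ ν = q.bind νs := by
  constructor
  · rintro ⟨q, x, νs, tsum_eq_one, hμ, hS, hν⟩
    exact ⟨⟨q, ENNReal.summable.hasSum_iff.mpr tsum_eq_one⟩, x, νs, hS, PMF.ext hμ, PMF.ext hν⟩
  · rintro ⟨q, x, νs, hS, rfl, rfl⟩
    exact ⟨q, x, νs, q.tsum_coe, fun _ => rfl, hS, fun _ => rfl⟩

theorem lift_map_bind {ι : Type*} (w : PMF ι) {x : ι → X} {νs : ι → PMF Y}
    (hS : ∀ i ∈ w.support, S (x i) (νs i)) : Lift S (w.map x) (w.bind νs) := by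
  obtain ⟨q, e, he, rfl⟩ := exists_pmf_nat_map_eq w
  exact lift_iff_exists_pmf_nat.mpr
    ⟨q, x ∘ e, νs ∘ e, fun n => hS _ (he n), PMF.map_comp .., PMF.bind_map ..⟩

theorem lift_bind (μ : PMF X) {f : X → PMF Y} (hS : ∀ x ∈ μ.support, S x (f x)) :
    Lift S μ (μ.bind f) := by
  simpa only [PMF.map_id] using lift_map_bind μ (x := id) hS

theorem lift_pure {x : X} {ν : PMF Y} (hS : S x ν) : Lift S (PMF.pure x) ν := by
  simpa only [PMF.pure_map, PMF.pure_bind] using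
    lift_map_bind (PMF.pure ()) (x := fun _ => x) (νs := fun _ => ν) fun _ _ => hS

theorem lift_mix {μ μ' : PMF X} {ν ν' : PMF Y} (p : ℝ≥0∞) (hp : p ≤ 1)
    (h : Lift S μ ν) (h' : Lift S μ' ν') : Lift S (mix p hp μ μ') (mix p hp ν ν') := by
  obtain ⟨q, x, νs, hS, rfl, rfl⟩ := lift_iff_exists_pmf_nat.mp h
  obtain ⟨q', x', νs', hS', rfl, rfl⟩ := lift_iff_exists_pmf_nat.mp h'
  have lift_sum := lift_map_bind (S := S) (x := Sum.elim x x') (νs := Sum.elim νs νs')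
    (mix p hp (q.map Sum.inl) (q'.map Sum.inr)) fun i _ => i.rec hS hS'
  simpa only [mix_map, mix_bind, PMF.map_comp, PMF.bind_map, Sum.elim_comp_inl,
    Sum.elim_comp_inr] using lift_sum

end Lift

section Automata

variable {α σ τ' : Type} {P : PAut α σ} {Q : PAut α τ'} {a : Option α}

theorem lift_step_of_trans {x : σ} {μ : PMF σ} (h : P.trans x a μ) :
    Lift (step P a) (PMF.pure x) μ :=
  lift_pure (Or.inl h)

theorem weakStep_of_lift_step {μ ν : PMF σ} (h : Lift (step P a) μ ν) : WeakStep P a μ ν :=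
  ⟨μ, ν, .refl, h, .refl⟩

theorem sim_of_kernel (f : σ → PMF τ') (init : WeakTau Q Q.init (P.init.bind f))
    (step : ∀ x a μ, P.trans x a μ → WeakStep Q a (f x) (μ.bind f))
    (final : ∀ x ∈ P.final, ∃ ν, WeakTau Q (f x) ν ∧ ∀ y ∈ ν.support, y ∈ Q.final) :
    Sim P Q := by
  refine ⟨fun x ν => ν = f x, ⟨⟨_, init, lift_bind _ fun _ _ => rfl⟩, ?_, ?_⟩⟩
  · rintro x a μ h _ rfl
    exact ⟨_, step x a μ h, lift_bind _ fun _ _ => rfl⟩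
  · rintro x _ hx rfl
    exact final x hx

theorem pseq_trans_inl {x : σ} {μ : PMF σ} (h : P.trans x a μ) :
    (pseq P Q).trans (Sum.inl x) a (μ.map Sum.inl) :=
  Or.inl ⟨μ, h, rfl⟩

theorem pseq_trans_of_mem_final {x : σ} (hx : x ∈ P.final) :
    (pseq P Q).trans (Sum.inl x) none (Q.init.map Sum.inr) :=
  Or.inr ⟨rfl, hx, rfl⟩

theorem pseq_trans_inr {y : τ'} {ν : PMF τ'} (h : Q.trans y a ν) :
    (pseq P Q).trans (Sum.inr y) a (ν.map Sum.inr) :=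
  ⟨ν, h, rfl⟩

variable {p : ℝ≥0∞} {hp : p ≤ 1}

theorem pchoice_trans_inl {x : σ} {μ : PMF σ} (h : P.trans x a μ) :
    (pchoice p hp P Q).trans (Sum.inl x) a (μ.map Sum.inl) :=
  ⟨μ, h, rfl⟩

theorem pchoice_trans_inr {y : τ'} {ν : PMF τ'} (h : Q.trans y a ν) :
    (pchoice p hp P Q).trans (Sum.inr y) a (ν.map Sum.inr) :=
  ⟨ν, h, rfl⟩

end Automata

section SplitKernel

variable {α σ₁ σ₂ σ₃ : Type} (p : ℝ≥0∞) (hp : p ≤ 1)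

/-- The Markov kernel whose graph is the simulation of `P · (Q ⊕_p R)` by `P · Q ⊕_p P · R`: a
state of `P` is sent to the `p`-mixture of its two copies, a state of `Q` or `R` to the point mass
at its only copy. -/
noncomputable def splitKernel : σ₁ ⊕ (σ₂ ⊕ σ₃) → PMF ((σ₁ ⊕ σ₂) ⊕ (σ₁ ⊕ σ₃))
  | Sum.inl x => mix p hp (PMF.pure (Sum.inl (Sum.inl x))) (PMF.pure (Sum.inr (Sum.inl x)))
  | Sum.inr (Sum.inl y) => PMF.pure (Sum.inl (Sum.inr y))
  | Sum.inr (Sum.inr z) => PMF.pure (Sum.inr (Sum.inr z))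

theorem map_inl_bind_splitKernel (μ : PMF σ₁) :
    (μ.map Sum.inl).bind (splitKernel (σ₂ := σ₂) (σ₃ := σ₃) p hp) =
      mix p hp ((μ.map Sum.inl).map Sum.inl) ((μ.map Sum.inl).map Sum.inr) := by
  rw [PMF.bind_map, PMF.map_comp, PMF.map_comp]
  exact bind_mix p hp μ _ _

theorem map_inr_inl_bind_splitKernel (μ : PMF σ₂) :
    ((μ.map Sum.inl).map Sum.inr).bind (splitKernel (σ₁ := σ₁) (σ₃ := σ₃) p hp) =
      (μ.map Sum.inr).map Sum.inl := by
  rw [PMF.bind_map, PMF.bind_map, PMF.map_comp]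
  rfl

theorem map_inr_inr_bind_splitKernel (μ : PMF σ₃) :
    ((μ.map Sum.inr).map Sum.inr).bind (splitKernel (σ₁ := σ₁) (σ₂ := σ₂) p hp) =
      (μ.map Sum.inr).map Sum.inr := by
  rw [PMF.bind_map, PMF.bind_map, PMF.map_comp]
  rfl

variable (P : PAut α σ₁) (Q : PAut α σ₂) (R : PAut α σ₃)

theorem pseq_pchoice_init_bind_splitKernel :
    (pseq P (pchoice p hp Q R)).init.bind (splitKernel p hp) =
      (pchoice p hp (pseq P Q) (pseq P R)).init :=
  map_inl_bind_splitKernel p hp P.init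

theorem pchoice_init_map_inr_bind_splitKernel :
    ((pchoice p hp Q R).init.map Sum.inr).bind (splitKernel (σ₁ := σ₁) p hp) =
      mix p hp ((Q.init.map Sum.inr).map Sum.inl) ((R.init.map Sum.inr).map Sum.inr) := by
  rw [← map_inr_inl_bind_splitKernel p hp, ← map_inr_inr_bind_splitKernel p hp, ← mix_bind,
    ← mix_map]
  rfl

variable {P Q R p hp}

theorem lift_step_splitKernel {s : σ₁ ⊕ (σ₂ ⊕ σ₃)} {a : Option α} {μ : PMF (σ₁ ⊕ (σ₂ ⊕ σ₃))}
    (h : (pseq P (pchoice p hp Q R)).trans s a μ) :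
    Lift (step (pchoice p hp (pseq P Q) (pseq P R)) a) (splitKernel p hp s)
      (μ.bind (splitKernel p hp)) := by
  rcases s with x | y | z
  · rcases h with ⟨μ, hμ, rfl⟩ | ⟨rfl, hx, rfl⟩
    · rw [map_inl_bind_splitKernel]
      exact lift_mix p hp (lift_step_of_trans (pchoice_trans_inl (pseq_trans_inl hμ)))
        (lift_step_of_trans (pchoice_trans_inr (pseq_trans_inl hμ)))
    · rw [pchoice_init_map_inr_bind_splitKernel]
      exact lift_mix p hp (lift_step_of_trans (pchoice_trans_inl (pseq_trans_of_mem_final hx)))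
        (lift_step_of_trans (pchoice_trans_inr (pseq_trans_of_mem_final hx)))
  · obtain ⟨_, ⟨μ, hμ, rfl⟩, rfl⟩ := h
    rw [map_inr_inl_bind_splitKernel]
    exact lift_step_of_trans (pchoice_trans_inl (pseq_trans_inr hμ))
  · obtain ⟨_, ⟨μ, hμ, rfl⟩, rfl⟩ := h
    rw [map_inr_inr_bind_splitKernel]
    exact lift_step_of_trans (pchoice_trans_inr (pseq_trans_inr hμ))

theorem mem_final_of_mem_support_splitKernel {s : σ₁ ⊕ (σ₂ ⊕ σ₃)}
    (hs : s ∈ (pseq P (pchoice p hp Q R)).final) {t : (σ₁ ⊕ σ₂) ⊕ (σ₁ ⊕ σ₃)}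
    (ht : t ∈ (splitKernel p hp s).support) :
    t ∈ (pchoice p hp (pseq P Q) (pseq P R)).final := by
  obtain ⟨_, ⟨y, hy, rfl⟩ | ⟨z, hz, rfl⟩, rfl⟩ := hs
  · obtain rfl := (PMF.mem_support_pure_iff _ _).mp ht
    exact Or.inl ⟨_, ⟨y, hy, rfl⟩, rfl⟩
  · obtain rfl := (PMF.mem_support_pure_iff _ _).mp ht
    exact Or.inr ⟨_, ⟨z, hz, rfl⟩, rfl⟩

end SplitKernel

/-- sequential composition left-subdistributes over probabilistic
choice: `P · (Q ⊕_p R) ≤ P · Q ⊕_p P · R` (the two occurrences of `P` on the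
right are disjoint copies). -/
theorem seq_left_subdistrib_pchoice {α σ₁ σ₂ σ₃ : Type}
    (P : PAut α σ₁) (Q : PAut α σ₂) (R : PAut α σ₃)
    (p : ℝ≥0∞) (hp : p ≤ 1) :
    Sim (pseq P (pchoice p hp Q R))
      (pchoice p hp (pseq P Q) (pseq P R)) := by
  refine sim_of_kernel (splitKernel p hp) ?init ?step ?final
  case init =>
    rw [pseq_pchoice_init_bind_splitKernel]
    exact .refl
  case step =>
    exact fun _ _ _ h => weakStep_of_lift_step (lift_step_splitKernel h)
  case final =>
    exact fun _ hs => ⟨_, .refl, fun _ => mem_final_of_mem_support_splitKernel hs⟩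

end PCKA
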